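/- Let ∑_{i=1}^k αᵢ sᵢ ≥ 1 with α ∈ ℝ^k, α ≥ 0, be a valid inequality for conv(P(R,f)) whose induced lattice-free set L_α is a triangle of type T^{2A} with f in the interior of L_α. Then the split rank of ∑_{i=1}^k αᵢ sᵢ ≥ 1 with respect to P(R,f)⁰ is finite. -/

import Mathlib

open Set Pointwise

abbrev Pt : Type := Fin 2 → ℝ

def IsIntPt (x : Pt) : Prop := ∀ j, ∃ z : ℤ, x j = (z : ℝ)

def IsRatPt (x : Pt) : Prop := ∀ j, ∃ q : ℚ, x j = (q : ℝ)

/-- The mixed-integer set `P(R,f)`. -/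
def mixedP (k : ℕ) (r : Fin k → Pt) (f : Pt) : Set (Pt × (Fin k → ℝ)) :=
  {p | IsIntPt p.1 ∧ (∀ i, 0 ≤ p.2 i) ∧ p.1 = f + ∑ i, p.2 i • r i}

/-- The linear relaxation `P(R,f)⁰`. -/
def relaxP (k : ℕ) (r : Fin k → Pt) (f : Pt) : Set (Pt × (Fin k → ℝ)) :=
  {p | (∀ i, 0 ≤ p.2 i) ∧ p.1 = f + ∑ i, p.2 i • r i}

/-- The convex cone generated by a set (all nonnegative combinations). -/
def coneGen (S : Set Pt) : Set Pt :=
  {x | ∃ (n : ℕ) (c : Fin n → ℝ) (v : Fin n → Pt),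
    (∀ j, 0 ≤ c j) ∧ (∀ j, v j ∈ S) ∧ x = ∑ j, c j • v j}

/-- The induced lattice-free set `L_α`. -/
def inducedSet (k : ℕ) (r : Fin k → Pt) (f : Pt) (α : Fin k → ℝ) : Set Pt :=
  convexHull ℝ ({f} ∪ {x | ∃ i, 0 < α i ∧ x = f + (α i)⁻¹ • r i}) +
    coneGen {x | ∃ i, α i = 0 ∧ x = r i}

def LatticeFree (S : Set Pt) : Prop := ∀ x ∈ interior S, ¬ IsIntPt x

/-- Validity of `∑ αᵢ sᵢ ≥ γ` for `conv(P(R,f))`. -/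
def ValidIneq (k : ℕ) (r : Fin k → Pt) (f : Pt) (α : Fin k → ℝ) (γ : ℝ) : Prop :=
  ∀ p ∈ mixedP k r f, γ ≤ ∑ i, α i * p.2 i

noncomputable def affDim {V : Type*} [AddCommGroup V] [Module ℝ V] (S : Set V) : ℕ :=
  Module.finrank ℝ (affineSpan ℝ S).direction

/-- Facet-defining inequality: valid and its face of the closed convex hull has
affine dimension exactly one less. -/
def IsFacet (k : ℕ) (r : Fin k → Pt) (f : Pt) (α : Fin k → ℝ) (γ : ℝ) : Prop :=
  ValidIneq k r f α γ ∧
  affDim {p ∈ closure (convexHull ℝ (mixedP k r f)) | ∑ i, α i * p.2 i = γ} + 1 =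
    affDim (convexHull ℝ (mixedP k r f))

def splitClosure (k : ℕ) (C : Set (Pt × (Fin k → ℝ))) : Set (Pt × (Fin k → ℝ)) :=
  ⋂ (π : Fin 2 → ℤ) (π₀ : ℤ),
    convexHull ℝ ((C ∩ {p | ∑ j, (π j : ℝ) * p.1 j ≤ (π₀ : ℝ)}) ∪
      (C ∩ {p | (π₀ : ℝ) + 1 ≤ ∑ j, (π j : ℝ) * p.1 j}))

def closures (k : ℕ) (r : Fin k → Pt) (f : Pt) : ℕ → Set (Pt × (Fin k → ℝ))
  | 0 => relaxP k r f
  | n + 1 => splitClosure k (closures k r f n)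

/-- The split rank of `∑ αᵢ sᵢ ≥ γ` w.r.t. `P(R,f)⁰`: least `j` such that the
inequality is valid on the `j`-th split closure, `⊤` if none exists. -/
noncomputable def splitRank (k : ℕ) (r : Fin k → Pt) (f : Pt) (α : Fin k → ℝ) (γ : ℝ) : ℕ∞ :=
  sInf {j : ℕ∞ | ∃ n : ℕ, j = (n : ℕ∞) ∧ ∀ p ∈ closures k r f n, γ ≤ ∑ i, α i * p.2 i}

def IsSplitSet (S : Set Pt) : Prop :=
  ∃ (π : Fin 2 → ℤ) (π₀ : ℤ), π ≠ 0 ∧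
    S = {x : Pt | (π₀ : ℝ) ≤ ∑ j, (π j : ℝ) * x j ∧ ∑ j, (π j : ℝ) * x j ≤ (π₀ : ℝ) + 1}

/-- Triangle of type `T¹`. -/
def IsT1 (S : Set Pt) : Prop :=
  ∃ v : Fin 3 → Pt, AffineIndependent ℝ v ∧ (∀ i, IsIntPt (v i)) ∧
    S = convexHull ℝ (Set.range v) ∧
    ∀ i j, i ≠ j → ∃! z, z ∈ openSegment ℝ (v i) (v j) ∧ IsIntPt z

/-- Triangle of type `T^{2A}`. -/
def IsT2A (S : Set Pt) : Prop :=
  ∃ v0 v1 v2 : Pt, AffineIndependent ℝ ![v0, v1, v2] ∧ ¬ IsIntPt v0 ∧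
    S = convexHull ℝ {v0, v1, v2} ∧
    (∃ z1 z2 : Pt, z1 ≠ z2 ∧ IsIntPt z1 ∧ IsIntPt z2 ∧
      z1 ∈ segment ℝ v1 v2 ∧ z2 ∈ segment ℝ v1 v2) ∧
    (∃! z, z ∈ openSegment ℝ v0 v1 ∧ IsIntPt z) ∧
    (∃! z, z ∈ openSegment ℝ v0 v2 ∧ IsIntPt z)

/-- Triangle of type `T^{2B}`. -/
def IsT2B (S : Set Pt) : Prop :=
  ∃ v0 v1 v2 : Pt, AffineIndependent ℝ ![v0, v1, v2] ∧ ¬ IsIntPt v0 ∧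
    S = convexHull ℝ {v0, v1, v2} ∧
    (∃ z1 z2 : Pt, z1 ≠ z2 ∧ IsIntPt z1 ∧ IsIntPt z2 ∧
      z1 ∈ segment ℝ v1 v2 ∧ z2 ∈ segment ℝ v1 v2) ∧
    (∃! z, z ∈ openSegment ℝ v0 v1 ∧ IsIntPt z) ∧
    (∀ z ∈ openSegment ℝ v0 v2, ¬ IsIntPt z)

/-- Triangle of type `T³`. -/
def IsT3 (S : Set Pt) : Prop :=
  ∃ v0 v1 v2 : Pt, AffineIndependent ℝ ![v0, v1, v2] ∧
    ¬ IsIntPt v0 ∧ ¬ IsIntPt v1 ∧ ¬ IsIntPt v2 ∧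
    S = convexHull ℝ {v0, v1, v2} ∧
    (∃! z, z ∈ openSegment ℝ v0 v1 ∧ IsIntPt z) ∧
    (∃! z, z ∈ openSegment ℝ v1 v2 ∧ IsIntPt z) ∧
    (∃! z, z ∈ openSegment ℝ v0 v2 ∧ IsIntPt z) ∧
    (∀ z, IsIntPt z → z ∈ frontier S →
      z ∈ openSegment ℝ v0 v1 ∨ z ∈ openSegment ℝ v1 v2 ∨ z ∈ openSegment ℝ v0 v2)

/-- A quadrilateral with vertices `v 0, v 1, v 2, v 3` in cyclic order; each `vᵢ`
is an extreme point of the hull and each side lies on the boundary. -/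
def IsQuadWith (S : Set Pt) (v : Fin 4 → Pt) : Prop :=
  S = convexHull ℝ (Set.range v) ∧
  (∀ i, v i ∈ Set.extremePoints ℝ S) ∧
  (∀ i : Fin 4, segment ℝ (v i) (v (i + 1)) ⊆ frontier S)

/-- Quadrilateral of type `Q¹`. -/
def IsQ1 (S : Set Pt) : Prop :=
  ∃ v : Fin 4 → Pt, IsQuadWith S v ∧
    (∃ z1 z2 : Pt, z1 ≠ z2 ∧ IsIntPt z1 ∧ IsIntPt z2 ∧
      z1 ∈ segment ℝ (v 0) (v 1) ∧ z2 ∈ segment ℝ (v 0) (v 1)) ∧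
    (∃ j : Fin 4, j ≠ 0 ∧
      (∀ i : Fin 4, i ≠ 0 → i ≠ j → ∃ z, IsIntPt z ∧ z ∈ segment ℝ (v i) (v (i + 1))) ∧
      (∀ z ∈ openSegment ℝ (v j) (v (j + 1)), ¬ IsIntPt z)) ∧
    (∃ T : Set Pt, (IsT1 T ∨ IsT2A T) ∧ S ⊆ T)

/-- Quadrilateral of type `Q²`. -/
def IsQ2 (S : Set Pt) : Prop :=
  ∃ v : Fin 4 → Pt, IsQuadWith S v ∧ (∀ i, ¬ IsIntPt (v i)) ∧
    ∀ i : Fin 4, ∃! z, z ∈ openSegment ℝ (v i) (v (i + 1)) ∧ IsIntPt z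


/-- Along the filter `F`, the inequality `u ≤ a * X + b * Y + c` can be derived from its validity
on the two sides of any split disjunction in the integral coordinates `X`, `Y`. -/
def ClosedUnderSplits {ι : Type*} (F : Filter ι) (X Y u : ι → ℝ) : Prop :=
  ∀ (m n N : ℤ) (a b c : ℝ),
    (∀ᶠ p in F, (m * X p + n * Y p ≤ N ∨ (N : ℝ) + 1 ≤ m * X p + n * Y p) →
      u p ≤ a * X p + b * Y p + c) →
    ∀ᶠ p in F, u p ≤ a * X p + b * Y p + c

namespace ClosedUnderSplits

variable {ι : Type*} {F : Filter ι} {X Y u : ι → ℝ}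

lemma reflect (hs : ClosedUnderSplits F X Y u) :
    ClosedUnderSplits F (fun p => 1 - X p) Y u := by
  intro m n N a b c h
  have := hs (-m) n (N - m) (-a) b (c + a) ?_
  · filter_upwards [this] with p hp
    linarith
  · filter_upwards [h] with p hp
    push_cast
    intro h'
    have := hp (h'.imp (fun h => by linarith) (fun h => by linarith))
    linarith

lemma split_fst (hs : ClosedUnderSplits F X Y u) (a b c : ℝ)
    (h : ∀ᶠ p in F, (X p ≤ 0 ∨ 1 ≤ X p) → u p ≤ a * X p + b * Y p + c) :
    ∀ᶠ p in F, u p ≤ a * X p + b * Y p + c := by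
  refine hs 1 0 0 a b c ?_
  filter_upwards [h] with p hp
  simpa using hp

lemma split_snd (hs : ClosedUnderSplits F X Y u) (N : ℤ) (a b c : ℝ)
    (h : ∀ᶠ p in F, (Y p ≤ N ∨ (N : ℝ) + 1 ≤ Y p) → u p ≤ a * X p + b * Y p + c) :
    ∀ᶠ p in F, u p ≤ a * X p + b * Y p + c := by
  refine hs 0 1 N a b c ?_
  filter_upwards [h] with p hp
  simpa using hp

/-- If `u ≤ ρ * (1 - Y)` and `u ≤ β * Y` then the split `Y ≤ 0 ∨ 1 ≤ Y` gives `u ≤ 0`. -/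
lemma le_zero (hs : ClosedUnderSplits F X Y u) {x ρ : ℝ} (hx : 0 < x) (hρ : 0 < ρ)
    (h0 : ∀ᶠ p in F, x * u p ≤ Y p) (h1 : ∀ᶠ p in F, u p ≤ ρ * (1 - Y p)) :
    ∀ᶠ p in F, u p ≤ 0 := by
  have := hs.split_snd 0 0 0 0 (by
    filter_upwards [h0, h1] with p hp hp' h
    rcases h with h | h
    · push_cast at h
      nlinarith
    · push_cast at h
      nlinarith)
  simpa using this

/-- One round of the splits on `X` and on `Y` improves the bound on `u` near the base. -/
lemma improve (hs : ClosedUnderSplits F X Y u) {A B C x : ℝ} (hA : A ≤ C)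
    (hB : B ≤ C) (hC : 0 < C) (hA0 : 0 ≤ A) (hB0 : 0 ≤ B) (hx : 0 < x)
    (h0 : ∀ᶠ p in F, x * u p ≤ Y p)
    (h1 : ∀ᶠ p in F, X p ≤ 0 → u p ≤ A * (1 - Y p))
    (h2 : ∀ᶠ p in F, 1 ≤ X p → u p ≤ B * (1 - Y p)) :
    (∀ᶠ p in F, (x + C⁻¹) * u p ≤ 1) ∧ ∀ᶠ p in F, (x + C⁻¹) * u p ≤ Y p := by
  have hCi : 0 < C⁻¹ := inv_pos.2 hC
  have hpos : 0 < x + C⁻¹ := by positivity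
  have key : ∀ (D U V : ℝ), 0 ≤ D → D ≤ C → U ≤ D * (1 - V) → x * U ≤ V →
      (x + C⁻¹) * U ≤ 1 := by
    intro D U V hD hDC hU hxU
    rcases le_total V 1 with hV | hV
    · have h3 : U ≤ C * (1 - V) := hU.trans (by gcongr)
      have h4 : C⁻¹ * U ≤ 1 - V := by
        rw [inv_mul_le_iff₀ hC]
        exact h3
      linarith
    · have : U ≤ 0 := hU.trans (by nlinarith)
      nlinarith
  have hb : ∀ᶠ p in F, (x + C⁻¹) * u p ≤ 1 := by
    have := hs.split_fst 0 0 (x + C⁻¹)⁻¹ (by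
      filter_upwards [h0, h1, h2] with p hp0 hp1 hp2 h
      have : (x + C⁻¹) * u p ≤ 1 := by
        rcases h with h | h
        · exact key A _ _ hA0 hA (hp1 h) hp0
        · exact key B _ _ hB0 hB (hp2 h) hp0
      rw [zero_mul, zero_mul, zero_add, zero_add, ← one_div, le_div_iff₀' hpos]
      exact this)
    filter_upwards [this] with p hp
    rw [zero_mul, zero_mul, zero_add, zero_add, ← one_div, le_div_iff₀' hpos] at hp
    exact hp
  refine ⟨hb, ?_⟩
  have := hs.split_snd 0 0 (x + C⁻¹)⁻¹ 0 (by
    filter_upwards [h0, hb] with p hp0 hp1 h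
    have : (x + C⁻¹) * u p ≤ Y p := by
      push_cast at h
      rcases h with h | h
      · have : u p ≤ 0 := by nlinarith
        nlinarith
      · linarith
    rw [zero_mul, zero_add, add_zero, inv_mul_eq_div, le_div_iff₀' hpos]
    exact this)
  filter_upwards [this] with p hp
  rw [zero_mul, zero_add, add_zero, inv_mul_eq_div, le_div_iff₀' hpos] at hp
  exact hp

/-- The upper bounds on `u` that can be derived are arbitrarily small. -/
lemma eventually_le (hs : ClosedUnderSplits F X Y u) {A B x : ℝ}
    (hA0 : 0 ≤ A) (hB0 : 0 ≤ B) (hx : 0 < x)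
    (h0 : ∀ᶠ p in F, x * u p ≤ Y p)
    (h1 : ∀ᶠ p in F, X p ≤ 0 → u p ≤ A * (1 - Y p))
    (h2 : ∀ᶠ p in F, 1 ≤ X p → u p ≤ B * (1 - Y p)) {ε : ℝ} (hε : 0 < ε) :
    ∀ᶠ p in F, u p ≤ ε := by
  set C := A + B + 1 with hC'
  have hC : 0 < C := by positivity
  have hCi : 0 < C⁻¹ := inv_pos.2 hC
  have step : ∀ n : ℕ, ∀ᶠ p in F, (x + n * C⁻¹) * u p ≤ Y p := by
    intro n
    induction n with
    | zero => simpa using h0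
    | succ n ih =>
      have := (hs.improve (C := C) (by linarith) (by linarith) hC hA0 hB0 (by positivity)
        ih h1 h2).2
      filter_upwards [this] with p hp
      push_cast
      linarith
  obtain ⟨n, hn⟩ := exists_nat_gt (ε⁻¹ * C)
  have := (hs.improve (C := C) (by linarith) (by linarith) hC hA0 hB0 (by positivity)
        (step n) h1 h2).1
  filter_upwards [this] with p hp
  by_contra! hlt
  have h3 : ε⁻¹ < n * C⁻¹ := by
    rw [← div_eq_mul_inv, lt_div_iff₀ hC]
    exact hn
  have h4 : ε⁻¹ * u p ≤ (x + n * C⁻¹ + C⁻¹) * u p := by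
    apply mul_le_mul_of_nonneg_right _ (by linarith)
    linarith
  have h5 : 1 < ε⁻¹ * u p := by
    rw [inv_mul_eq_div, lt_div_iff₀ hε]
    linarith
  linarith

/-- If `u` admits arbitrarily small upper bounds, then the coefficient in an inequality
`u ≤ l * (X - a * (Y - 1))` with rational `a` can be decreased. -/
lemma lower (hs : ClosedUnderSplits F X Y u) (hε : ∀ ε > 0, ∀ᶠ p in F, u p ≤ ε)
    {l l' : ℝ} (hl' : 0 < l') (hl : l' ≤ l) (a : ℚ)
    (h : ∀ᶠ p in F, u p ≤ l * (X p - a * (Y p - 1))) :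
    ∀ᶠ p in F, u p ≤ l' * (X p - a * (Y p - 1)) := by
  have hden : (0 : ℝ) < a.den := by exact_mod_cast a.den_pos
  have ha : (a : ℝ) * a.den = a.num := by exact_mod_cast Rat.mul_den_eq_num a
  have := hs a.den (-a.num) (-a.num) l' (-(l' * a)) (l' * a) (by
    filter_upwards [h, hε (l' / a.den) (by positivity)] with p hp hp' hd
    push_cast at hd
    have e1 : (a.den : ℝ) * X p + -(a.num : ℝ) * Y p
        = a.den * (X p - a * (Y p - 1)) - a.num := by
      rw [← ha]; ring
    rw [e1] at hd
    have : u p ≤ l' * (X p - a * (Y p - 1)) := by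
      rcases hd with hd | hd
      · have : X p - a * (Y p - 1) ≤ 0 := by
          by_contra! hc
          have := mul_pos hden hc
          linarith
        nlinarith
      · refine hp'.trans ?_
        rw [div_le_iff₀ hden]
        nlinarith
    linarith)
  filter_upwards [this] with p hp
  linarith

lemma le_zero_of_triangle_of_zero (hs : ClosedUnderSplits F X Y u) {b : ℚ}
    (hb : 1 < b) {x l₁ l₂ : ℝ} (hx : 0 < x) (hl₁ : 0 < l₁) (hl₂ : 0 < l₂)
    (h0 : ∀ᶠ p in F, x * u p ≤ Y p)
    (hε : ∀ ε > 0, ∀ᶠ p in F, u p ≤ ε)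
    (h1 : ∀ᶠ p in F, u p ≤ l₁ * X p)
    (h2 : ∀ᶠ p in F, u p ≤ l₂ * (1 - X p - b * (Y p - 1))) :
    ∀ᶠ p in F, u p ≤ 0 := by
  have hb' : (1 : ℝ) < b := by exact_mod_cast hb
  set θ := (l₁ / 2) / (l₁ + l₂) with hθ
  have hθ0 : 0 < θ := by positivity
  have hθe : θ * (l₁ + l₂) = l₁ / 2 := by rw [hθ]; field_simp
  have hθ1 : θ < 1 := by nlinarith
  set ρ := θ * l₂ * (b - 1) with hρ
  have hρ0 : 0 < ρ := mul_pos (mul_pos hθ0 hl₂) (by linarith)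
  have h1' : ∀ᶠ p in F, u p ≤ l₁ / 2 * X p := by
    have := hs.lower hε (l' := l₁ / 2) (l := l₁) (by positivity) (by linarith) 0 (by simpa using h1)
    simpa using this
  have h3 : ∀ᶠ p in F, u p ≤ l₁ / 2 * X p + (-ρ) * Y p + ρ := by
    refine hs.split_snd 1 _ _ _ ?_
    filter_upwards [h1, h1', h2] with p hp1 hp1' hp2 h
    push_cast at h
    rcases h with h | h
    · nlinarith
    · have e1 : (1 - θ) * u p ≤ (1 - θ) * (l₁ * X p) := by gcongr
      have e2 : θ * u p ≤ θ * (l₂ * (1 - X p - b * (Y p - 1))) := by gcongr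
      have e3 : u p ≤ l₁ / 2 * X p + θ * l₂ * (1 - b * (Y p - 1)) := by
        have : l₁ / 2 * X p = (l₁ - θ * (l₁ + l₂)) * X p := by rw [hθe]; ring
        rw [this]
        linarith
      have e4 : θ * l₂ * (1 - b * (Y p - 1)) ≤ θ * l₂ * (- (b - 1) * (Y p - 1)) := by
        gcongr
        linarith
      rw [hρ]
      linarith
  have h2' : ∀ᶠ p in F, u p ≤ ρ / b * (1 - X p - b * (Y p - 1)) := by
    refine hs.reflect.lower hε (by positivity) ?_ b h2
    rw [div_le_iff₀ (by positivity), hρ, mul_comm θ, mul_assoc]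
    gcongr
    nlinarith
  refine hs.le_zero hx hρ0 h0 ?_
  have h4 := hs.split_fst 0 (-ρ) ρ (by
    filter_upwards [h3, h2'] with p hp3 hp2 h
    rcases h with h | h
    · nlinarith
    · have : ρ / b * (1 - X p - b * (Y p - 1)) = ρ / b * (1 - X p) - ρ * (Y p - 1) := by
        field_simp
      have : 0 < ρ / b := by positivity
      nlinarith)
  filter_upwards [h4] with p hp
  linarith

/-- The inequalities describing a triangle of type `T^{2A}` in normalised integral coordinates
imply `u ≤ 0` after finitely many rounds of splits. -/
theorem le_zero_of_triangle (hs : ClosedUnderSplits F X Y u) {a b : ℚ}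
    (ha : 0 ≤ a) (hb : 0 ≤ b) (hab : a = 0 → 1 < b) (hba : b = 0 → 1 < a)
    {x l₁ l₂ : ℝ} (hx : 0 < x) (hl₁ : 0 < l₁) (hl₂ : 0 < l₂)
    (h0 : ∀ᶠ p in F, x * u p ≤ Y p)
    (h1 : ∀ᶠ p in F, u p ≤ l₁ * (X p - a * (Y p - 1)))
    (h2 : ∀ᶠ p in F, u p ≤ l₂ * (1 - X p - b * (Y p - 1))) :
    ∀ᶠ p in F, u p ≤ 0 := by
  have ha' : (0 : ℝ) ≤ a := by exact_mod_cast ha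
  have hb' : (0 : ℝ) ≤ b := by exact_mod_cast hb
  have hε : ∀ ε > 0, ∀ᶠ p in F, u p ≤ ε := fun ε hε => by
    refine hs.eventually_le (A := l₁ * a) (B := l₂ * b) (by positivity) (by positivity) hx h0
      ?_ ?_ hε
    · filter_upwards [h1] with p hp h
      nlinarith
    · filter_upwards [h2] with p hp h
      nlinarith
  rcases ha.eq_or_lt with rfl | ha0
  · exact hs.le_zero_of_triangle_of_zero (hab rfl) hx hl₁ hl₂ h0 hε (by simpa using h1) h2
  rcases hb.eq_or_lt with rfl | hb0
  · refine hs.reflect.le_zero_of_triangle_of_zero (hba rfl) hx hl₂ hl₁ h0 hε (by simpa using h2) ?_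
    simpa using h1
  have ha0' : (0 : ℝ) < a := by exact_mod_cast ha0
  have hb0' : (0 : ℝ) < b := by exact_mod_cast hb0
  set ρ := min (l₁ * a) (l₂ * b) with hρ
  have hρ0 : 0 < ρ := lt_min (by positivity) (by positivity)
  have h1' : ∀ᶠ p in F, u p ≤ ρ / a * (X p - a * (Y p - 1)) := by
    refine hs.lower hε (by positivity) ?_ a h1
    rw [div_le_iff₀ ha0']
    exact min_le_left _ _
  have h2' : ∀ᶠ p in F, u p ≤ ρ / b * (1 - X p - b * (Y p - 1)) := by
    refine hs.reflect.lower hε (by positivity) ?_ b h2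
    rw [div_le_iff₀ hb0']
    exact min_le_right _ _
  refine hs.le_zero hx hρ0 h0 ?_
  have h4 := hs.split_fst 0 (-ρ) ρ (by
    filter_upwards [h1', h2'] with p hp1 hp2 h
    rcases h with h | h
    · have : ρ / a * (X p - a * (Y p - 1)) = ρ / a * X p - ρ * (Y p - 1) := by
        field_simp
      have : 0 < ρ / a := by positivity
      nlinarith
    · have : ρ / b * (1 - X p - b * (Y p - 1)) = ρ / b * (1 - X p) - ρ * (Y p - 1) := by
        field_simp
      have : 0 < ρ / b := by positivity
      nlinarith)
  filter_upwards [h4] with p hp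
  linarith

end ClosedUnderSplits

/-- The conditions on the slopes `σ₁`, `σ₂` and the base endpoints `x₁`, `x₂` of a triangle of
height `h` with base on the line `Y = 0` that contains no lattice point in its interior and has
lattice points of a single height on each of its two other open sides. -/
structure SideData (x₁ x₂ σ₁ σ₂ h : ℝ) : Prop where
  left : x₁ ≤ 0
  right : 1 ≤ x₂
  pos : 0 < h
  apex : x₂ + h * σ₂ = x₁ + h * σ₁
  apex_not_int : ∀ m n : ℤ, x₁ + h * σ₁ = m → h = n → False
  free : ∀ m n : ℤ, (0 : ℝ) < n → x₁ + n * σ₁ < m → m < x₂ + n * σ₂ → False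
  exists₁ : ∃ m n : ℤ, (0 : ℝ) < n ∧ n < h ∧ m = x₁ + n * σ₁
  exists₂ : ∃ m n : ℤ, (0 : ℝ) < n ∧ n < h ∧ m = x₂ + n * σ₂
  unique₁ : ∀ m n m' n' : ℤ, (0 : ℝ) < n → n < h → m = x₁ + n * σ₁ →
    (0 : ℝ) < n' → n' < h → m' = x₁ + n' * σ₁ → n = n'
  unique₂ : ∀ m n m' n' : ℤ, (0 : ℝ) < n → n < h → m = x₂ + n * σ₂ →
    (0 : ℝ) < n' → n' < h → m' = x₂ + n' * σ₂ → n = n'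

namespace SideData

variable {x₁ x₂ σ₁ σ₂ h : ℝ}

lemma reflect (H : SideData x₁ x₂ σ₁ σ₂ h) :
    SideData (1 - x₂) (1 - x₁) (-σ₂) (-σ₁) h where
  left := by linarith [H.right]
  right := by linarith [H.left]
  pos := H.pos
  apex := by linarith [H.apex]
  apex_not_int m n hm hn := H.apex_not_int (1 - m) n (by push_cast; linarith [H.apex]) hn
  free m n hn h1 h2 := H.free (1 - m) n hn (by push_cast; linarith) (by push_cast; linarith)
  exists₁ := by
    obtain ⟨m, n, h1, h2, h3⟩ := H.exists₂
    exact ⟨1 - m, n, h1, h2, by push_cast; linarith⟩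
  exists₂ := by
    obtain ⟨m, n, h1, h2, h3⟩ := H.exists₁
    exact ⟨1 - m, n, h1, h2, by push_cast; linarith⟩
  unique₁ m n m' n' h1 h2 h3 h4 h5 h6 :=
    H.unique₂ (1 - m) n (1 - m') n' h1 h2 (by push_cast; linarith) h4 h5 (by push_cast; linarith)
  unique₂ m n m' n' h1 h2 h3 h4 h5 h6 :=
    H.unique₁ (1 - m) n (1 - m') n' h1 h2 (by push_cast; linarith) h4 h5 (by push_cast; linarith)

/-- The lattice point on the left side has height one. -/
lemma exists_height_one (H : SideData x₁ x₂ σ₁ σ₂ h) :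
    1 < h ∧ ∃ m : ℤ, (m : ℝ) = x₁ + σ₁ := by
  obtain ⟨m, n, hn0, hnh, hm⟩ := H.exists₁
  have hn0' : 0 < n := by exact_mod_cast hn0
  have hn1 : (1 : ℝ) ≤ n := by exact_mod_cast hn0'
  suffices n = 1 by
    subst this
    exact ⟨by simpa using hnh, m, by simpa using hm⟩
  by_contra hne
  have hn2' : 2 ≤ n := by omega
  have hn2 : (2 : ℝ) ≤ n := by exact_mod_cast hn2'
  obtain ⟨q, hq1, hq2⟩ : ∃ q : ℤ, m ≤ q * n ∧ q * n ≤ m + (n - 1) := by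
    refine ⟨(m + (n - 1)) / n, ?_, ?_⟩
    · have := Int.lt_ediv_add_one_mul_self (m + (n - 1)) hn0'
      linarith
    · exact Int.ediv_mul_le _ (by omega)
  have hq1' : (m : ℝ) ≤ q * n := by exact_mod_cast hq1
  have hq2' : (q : ℝ) * n ≤ m + (n - 1) := by exact_mod_cast hq2
  have hleft : x₁ + σ₁ ≤ q := by
    have : n * (x₁ + σ₁) ≤ n * q := by nlinarith [H.left]
    exact le_of_mul_le_mul_left this hn0
  have hgap : m < x₂ + n * σ₂ := by
    rw [hm]
    have h3 : 0 < x₂ - x₁ := by linarith [H.left, H.right]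
    have h4 : h * (x₂ - x₁ + n * (σ₂ - σ₁)) = (h - n) * (x₂ - x₁) := by
      linear_combination (n : ℝ) * H.apex
    have h5 : 0 < h * (x₂ - x₁ + n * (σ₂ - σ₁)) := by
      rw [h4]
      exact mul_pos (by linarith) h3
    have := (mul_pos_iff_of_pos_left H.pos).1 h5
    linarith
  have hright : q < x₂ + σ₂ := by
    have : n * (q : ℝ) < n * (x₂ + σ₂) := by nlinarith [H.right]
    exact lt_of_mul_lt_mul_left this hn0.le
  rcases hleft.eq_or_lt with he | hlt
  · exact hne (H.unique₁ m n q 1 hn0 hnh hm (by norm_num) (by push_cast; linarith)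
      (by push_cast; linarith))
  · exact H.free q 1 (by norm_num) (by push_cast; linarith) (by push_cast; linarith)

lemma exists_shear (H : SideData x₁ x₂ σ₁ σ₂ h) :
    ∃ m : ℤ, (m : ℝ) = x₁ + σ₁ ∧ (m : ℝ) + 1 = x₂ + σ₂ := by
  obtain ⟨hh, m, hm⟩ := H.exists_height_one
  obtain ⟨-, m', hm'⟩ := H.reflect.exists_height_one
  refine ⟨m, hm, ?_⟩
  have hgap : m < x₂ + σ₂ := by
    rw [hm]
    have h3 : 0 < x₂ - x₁ := by linarith [H.left, H.right]
    have h4 : h * (x₂ - x₁ + (σ₂ - σ₁)) = (h - 1) * (x₂ - x₁) := by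
      linear_combination H.apex
    have h5 : 0 < h * (x₂ - x₁ + (σ₂ - σ₁)) := by
      rw [h4]
      exact mul_pos (by linarith) h3
    have := (mul_pos_iff_of_pos_left H.pos).1 h5
    linarith
  have h1 : m < 1 - m' := by
    have : (m : ℝ) < ((1 - m' : ℤ) : ℝ) := by push_cast; linarith
    exact_mod_cast this
  have h2 : ¬ m + 1 < 1 - m' := by
    intro hlt
    have : ((m + 1 : ℤ) : ℝ) < ((1 - m' : ℤ) : ℝ) := by exact_mod_cast hlt
    push_cast at this
    exact H.free (m + 1) 1 (by norm_num) (by push_cast; linarith) (by push_cast; linarith)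
  have h3 : m + 1 = 1 - m' := by omega
  have : (m : ℝ) + 1 = 1 - m' := by exact_mod_cast h3
  linarith

lemma two_lt_of_eq_zero (H : SideData x₁ x₂ σ₁ σ₂ h) (hx : x₁ = 0) : 2 < x₂ := by
  obtain ⟨m, hm1, hm2⟩ := H.exists_shear
  have hh := H.exists_height_one.1
  have hap := H.apex
  subst hx
  have hσ₁ : σ₁ = m := by linarith
  have hσ₂ : σ₂ = m + 1 - x₂ := by linarith
  subst hσ₁ hσ₂
  have h2 : h ≤ 2 := by
    by_contra! hlt
    have := H.unique₁ m 1 (2 * m) 2 (by norm_num) (by push_cast; linarith) (by push_cast; linarith)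
      (by norm_num) (by push_cast; linarith) (by push_cast; linarith)
    omega
  have hr := H.right
  have e : x₂ = h * (x₂ - 1) := by linarith
  have hge : 2 ≤ x₂ := by nlinarith
  rcases hge.eq_or_lt with he | hlt
  · exfalso
    have : h = 2 := by rw [← he] at e; linarith
    exact H.apex_not_int (2 * m) 2 (by push_cast; rw [this]; ring) (by push_cast; exact this)
  · exact hlt

lemma lt_neg_one_of_eq_one (H : SideData x₁ x₂ σ₁ σ₂ h) (hx : x₂ = 1) : x₁ < -1 := by
  have := H.reflect.two_lt_of_eq_zero (by linarith)
  linarith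

end SideData

section SplitFilter

variable {k : ℕ} {r : Fin k → Pt} {f : Pt}

lemma splitClosure_subset {C : Set (Pt × (Fin k → ℝ))} (hC : Convex ℝ C) :
    splitClosure k C ⊆ C := fun p hp => by
  have := mem_iInter₂.1 hp 0 0
  exact convexHull_min (union_subset inter_subset_left inter_subset_left) hC this

lemma convex_splitClosure (C : Set (Pt × (Fin k → ℝ))) : Convex ℝ (splitClosure k C) :=
  convex_iInter₂ fun _ _ => convex_convexHull ℝ _

lemma convex_relaxP : Convex ℝ (relaxP k r f) := by
  rintro ⟨x, s⟩ ⟨hs, hx⟩ ⟨y, t⟩ ⟨ht, hy⟩ a b ha hb hab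
  simp only at hs hx ht hy
  refine ⟨fun i => ?_, ?_⟩
  · have := hs i
    have := ht i
    simp only [Prod.smul_mk, Prod.mk_add_mk, Pi.add_apply, Pi.smul_apply, smul_eq_mul]
    positivity
  · simp only [Prod.smul_mk, Prod.mk_add_mk, Pi.add_apply, Pi.smul_apply, smul_eq_mul, add_smul,
      mul_smul, Finset.sum_add_distrib, ← Finset.smul_sum, hx, hy, smul_add]
    nth_rewrite 3 [← one_smul ℝ f]
    rw [← hab, add_smul]
    abel

lemma convex_closures (n : ℕ) : Convex ℝ (closures k r f n) := by
  cases n with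
  | zero => exact convex_relaxP
  | succ n => exact convex_splitClosure _

lemma antitone_closures : Antitone (closures k r f) :=
  antitone_nat_of_succ_le fun n => splitClosure_subset (convex_closures n)

/-- The filter generated by the iterated split closures. -/
def splitFilter (k : ℕ) (r : Fin k → Pt) (f : Pt) : Filter (Pt × (Fin k → ℝ)) :=
  ⨅ n, Filter.principal (closures k r f n)

lemma eventually_splitFilter {P : Pt × (Fin k → ℝ) → Prop} :
    (∀ᶠ p in splitFilter k r f, P p) ↔ ∃ n, ∀ p ∈ closures k r f n, P p := by
  rw [splitFilter, (Filter.hasBasis_iInf_principal antitone_closures.directed_ge).eventually_iff]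
  simp

lemma splitFilter_of_split {S : Set (Pt × (Fin k → ℝ))} (hS : Convex ℝ S) (π : Fin 2 → ℤ)
    (π₀ : ℤ) (h : ∀ᶠ p in splitFilter k r f, (∑ j, (π j : ℝ) * p.1 j ≤ (π₀ : ℝ) ∨
      (π₀ : ℝ) + 1 ≤ ∑ j, (π j : ℝ) * p.1 j) → p ∈ S) :
    ∀ᶠ p in splitFilter k r f, p ∈ S := by
  rw [eventually_splitFilter] at h ⊢
  obtain ⟨n, hn⟩ := h
  refine ⟨n + 1, fun p hp => ?_⟩
  refine convexHull_min ?_ hS (mem_iInter₂.1 hp π π₀)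
  rintro q (⟨hq, hq'⟩ | ⟨hq, hq'⟩)
  · exact hn q hq (Or.inl hq')
  · exact hn q hq (Or.inr hq')

lemma splitRank_ne_top {α : Fin k → ℝ} {γ : ℝ}
    (h : ∀ᶠ p in splitFilter k r f, γ ≤ ∑ i, α i * p.2 i) : splitRank k r f α γ ≠ ⊤ := by
  obtain ⟨n, hn⟩ := eventually_splitFilter.1 h
  exact ne_top_of_le_ne_top (ENat.natCast_ne_top n) (sInf_le ⟨n, rfl, hn⟩)

end SplitFilter

/-- An affine function on the plane with integer coefficients. -/
def IsIntAff (X : Pt →ᵃ[ℝ] ℝ) : Prop :=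
  ∃ (m : Fin 2 → ℤ) (c : ℤ), ∀ x, X x = ∑ j, (m j : ℝ) * x j + c

/-- A pair of affine functions that identifies the plane with `ℝ²` and integer points
with `ℤ²`. -/
structure IsIntCoord (X Y : Pt →ᵃ[ℝ] ℝ) : Prop where
  fst : IsIntAff X
  snd : IsIntAff Y
  surj : ∀ m n : ℤ, ∃ z, IsIntPt z ∧ X z = m ∧ Y z = n
  inj : ∀ z w, X z = X w → Y z = Y w → z = w

namespace IsIntAff

variable {X Y : Pt →ᵃ[ℝ] ℝ}

lemma exists_int (hX : IsIntAff X) {z : Pt} (hz : IsIntPt z) : ∃ n : ℤ, X z = n := by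
  obtain ⟨m, c, h⟩ := hX
  choose g hg using hz
  refine ⟨∑ j, m j * g j + c, ?_⟩
  rw [h]
  push_cast
  simp [hg]

lemma neg (hX : IsIntAff X) : IsIntAff (-X) := by
  obtain ⟨m, c, h⟩ := hX
  refine ⟨-m, -c, fun x => ?_⟩
  simp [h]
  ring

lemma sub_smul (hX : IsIntAff X) (hY : IsIntAff Y) (n : ℤ) : IsIntAff (X - (n : ℝ) • Y) := by
  obtain ⟨m, c, h⟩ := hX
  obtain ⟨m', c', h'⟩ := hY
  refine ⟨fun j => m j - n * m' j, c - n * c', fun x => ?_⟩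
  simp [h, h']
  ring

lemma exists_rat_linear (hX : IsIntAff X) {f v : Pt} (hf : IsRatPt f) (hv : IsRatPt v) :
    ∃ p q : ℚ, X f = p ∧ ∀ c : ℝ, X (f + c • v) = p + c * q := by
  obtain ⟨m, d, h⟩ := hX
  choose F hF using hf
  choose V hV using hv
  refine ⟨∑ j, m j * F j + d, ∑ j, m j * V j, ?_, fun c => ?_⟩
  · rw [h]
    simp [hF]
  · rw [h]
    simp [hF, hV]
    ring

end IsIntAff

/-- A point at which a ray with rational data meets a rational line has rational coordinates. -/
lemma exists_rat_of_ray {X Y : Pt →ᵃ[ℝ] ℝ} (hX : IsIntAff X) (hY : IsIntAff Y) {f v : Pt}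
    (hf : IsRatPt f) (hv : IsRatPt v) {c : ℝ} (h0 : Y (f + c • v) = 0) (hf0 : Y f ≠ 0) :
    ∃ q : ℚ, X (f + c • v) = q := by
  obtain ⟨p, q, h1, h2⟩ := hX.exists_rat_linear hf hv
  obtain ⟨p', q', h1', h2'⟩ := hY.exists_rat_linear hf hv
  rw [h2'] at h0
  have hq : (q' : ℝ) ≠ 0 := by
    intro hq
    rw [hq, mul_zero, add_zero] at h0
    exact hf0 (h1'.trans h0)
  have hc : c = ((-p' / q' : ℚ) : ℝ) := by
    push_cast
    rw [eq_div_iff hq]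
    linarith
  exact ⟨p + (-p' / q') * q, by rw [h2, hc]; push_cast; ring⟩

namespace IsIntCoord

variable {X Y : Pt →ᵃ[ℝ] ℝ}

lemma isIntPt (h : IsIntCoord X Y) {z : Pt} {m n : ℤ} (hm : X z = m) (hn : Y z = n) :
    IsIntPt z := by
  obtain ⟨w, hw, h1, h2⟩ := h.surj m n
  rw [h.inj z w (hm.trans h1.symm) (hn.trans h2.symm)]
  exact hw

lemma neg_snd (h : IsIntCoord X Y) : IsIntCoord X (-Y) where
  fst := h.fst
  snd := h.snd.neg
  surj m n := by
    obtain ⟨z, hz, h1, h2⟩ := h.surj m (-n)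
    exact ⟨z, hz, h1, by simp [h2]⟩
  inj z w h1 h2 := h.inj z w h1 (by simpa using h2)

lemma shear (h : IsIntCoord X Y) (k : ℤ) : IsIntCoord (X - (k : ℝ) • Y) Y where
  fst := h.fst.sub_smul h.snd k
  snd := h.snd
  surj m n := by
    obtain ⟨z, hz, h1, h2⟩ := h.surj (m + k * n) n
    exact ⟨z, hz, by simp [h1, h2], h2⟩
  inj z w h1 h2 := h.inj z w (by simpa [h2] using h1) h2

/-- The split closures are closed under the split operation in integral coordinates. -/
lemma closedUnderSplits (h : IsIntCoord X Y) {k : ℕ} (r : Fin k → Pt) (f : Pt)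
    (α : Fin k → ℝ) :
    ClosedUnderSplits (splitFilter k r f) (fun p => X p.1) (fun p => Y p.1)
      (fun p => 1 - ∑ i, α i * p.2 i) := by
  intro m n N a b c hs
  obtain ⟨μ, d, hX⟩ := h.fst
  obtain ⟨ν, e, hY⟩ := h.snd
  have hconv : Convex ℝ {p : Pt × (Fin k → ℝ) |
      1 - ∑ i, α i * p.2 i ≤ a * X p.1 + b * Y p.1 + c} := by
    rintro ⟨x, s⟩ hx ⟨y, t⟩ hy A B hA hB hAB
    simp only [mem_ofPred_eq, Prod.smul_mk, Prod.mk_add_mk] at hx hy ⊢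
    rw [Convex.combo_affine_apply hAB, Convex.combo_affine_apply hAB]
    have : ∑ i, α i * (A • s + B • t) i = A * ∑ i, α i * s i + B * ∑ i, α i * t i := by
      rw [Finset.mul_sum, Finset.mul_sum, ← Finset.sum_add_distrib]
      refine Finset.sum_congr rfl fun i _ => ?_
      simp
      ring
    rw [this]
    simp only [smul_eq_mul]
    have h1 := mul_le_mul_of_nonneg_left hx hA
    have h2 := mul_le_mul_of_nonneg_left hy hB
    obtain rfl : B = 1 - A := by linarith
    linarith
  refine splitFilter_of_split hconv (fun j => m * μ j + n * ν j) (N - m * d - n * e) ?_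
  filter_upwards [hs] with p hp h'
  apply hp
  have hsum : ∑ j, ((m * μ j + n * ν j : ℤ) : ℝ) * p.1 j
      = m * X p.1 + n * Y p.1 - m * d - n * e := by
    rw [hX, hY]
    simp
    ring
  rw [hsum] at h'
  push_cast at h'
  exact h'.imp (fun h => by linarith) (fun h => by linarith)

end IsIntCoord

/-- Two distinct integer points lie on the first axis of integral coordinates. -/
lemma exists_isIntCoord {z w : Pt} (hz : IsIntPt z) (hw : IsIntPt w) (hne : z ≠ w) :
    ∃ X Y : Pt →ᵃ[ℝ] ℝ, IsIntCoord X Y ∧ X z = 0 ∧ Y z = 0 ∧ Y w = 0 ∧ 1 ≤ X w := by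
  choose a ha using hz
  choose b hb using hw
  have hg : 0 < Int.gcd (b 0 - a 0) (b 1 - a 1) := by
    rw [Int.gcd_pos_iff]
    by_contra! hcon
    apply hne
    funext j
    rw [ha, hb]
    fin_cases j
    · simp only [Fin.zero_eta, Int.cast_inj]; omega
    · simp only [Fin.mk_one, Int.cast_inj]; omega
  obtain ⟨g, p, q, hg0, hpq, hp, hq⟩ := Int.exists_gcd_one' hg
  obtain ⟨s, t, hst⟩ := Int.isCoprime_iff_gcd_eq_one.2 hpq
  have hstR : (s : ℝ) * p + t * q = 1 := by exact_mod_cast hst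
  have hb0 : (b 0 : ℝ) = a 0 + p * g := by
    have : b 0 = a 0 + p * g := by linarith
    exact_mod_cast this
  have hb1 : (b 1 : ℝ) = a 1 + q * g := by
    have : b 1 = a 1 + q * g := by linarith
    exact_mod_cast this
  let P : Fin 2 → (Pt →ᵃ[ℝ] ℝ) := fun j => (LinearMap.proj j : Pt →ₗ[ℝ] ℝ).toAffineMap
  let X : Pt →ᵃ[ℝ] ℝ := (s : ℝ) • P 0 + (t : ℝ) • P 1
    - AffineMap.const ℝ Pt ((s : ℝ) * a 0 + t * a 1)
  let Y : Pt →ᵃ[ℝ] ℝ := (p : ℝ) • P 1 - (q : ℝ) • P 0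
    - AffineMap.const ℝ Pt ((p : ℝ) * a 1 - q * a 0)
  have hX : ∀ x, X x = s * x 0 + t * x 1 - (s * a 0 + t * a 1) := fun x => by simp [X, P]
  have hY : ∀ x, Y x = p * x 1 - q * x 0 - (p * a 1 - q * a 0) := fun x => by simp [Y, P]
  refine ⟨X, Y, ⟨⟨![s, t], -(s * a 0 + t * a 1), fun x => ?_⟩,
    ⟨![-q, p], -(p * a 1 - q * a 0), fun x => ?_⟩, fun m n => ?_, fun x y h1 h2 => ?_⟩,
    ?_, ?_, ?_, ?_⟩
  · rw [hX]; simp; ring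
  · rw [hY]; simp; ring
  · refine ⟨![((a 0 + m * p - n * t : ℤ) : ℝ), ((a 1 + m * q + n * s : ℤ) : ℝ)], ?_, ?_, ?_⟩
    · intro j
      fin_cases j
      · exact ⟨_, rfl⟩
      · exact ⟨_, rfl⟩
    · rw [hX]
      simp
      linear_combination (m : ℝ) * hstR
    · rw [hY]
      simp
      linear_combination (n : ℝ) * hstR
  · rw [hX, hX] at h1
    rw [hY, hY] at h2
    funext j
    fin_cases j
    · simp only [Fin.zero_eta]
      linear_combination (p : ℝ) * h1 - t * h2 - (x 0 - y 0) * hstR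
    · simp only [Fin.mk_one]
      linear_combination (q : ℝ) * h1 + s * h2 - (x 1 - y 1) * hstR
  · rw [hX, ha, ha]; ring
  · rw [hY, ha, ha]; ring
  · rw [hY, hb, hb, hb0, hb1]; ring
  · rw [hX, hb, hb, hb0, hb1]
    have : (1 : ℝ) ≤ g := by exact_mod_cast hg0
    have : (s : ℝ) * (a 0 + p * g) + t * (a 1 + q * g) - (s * a 0 + t * a 1) = g := by
      linear_combination (g : ℝ) * hstR
    linarith

section InducedSet

variable {k : ℕ} {r : Fin k → Pt} {f : Pt} {α : Fin k → ℝ}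

lemma mem_coneGen {S : Set Pt} {v : Pt} (hv : v ∈ S) {c : ℝ} (hc : 0 ≤ c) : c • v ∈ coneGen S :=
  ⟨1, fun _ => c, fun _ => v, fun _ => hc, fun _ => hv, by simp⟩

lemma pos_of_isBounded (hα : ∀ i, 0 ≤ α i) (hr : ∀ i, r i ≠ 0)
    (hb : Bornology.IsBounded (inducedSet k r f α)) (i : Fin k) : 0 < α i := by
  refine (hα i).lt_of_ne fun h0 => ?_
  obtain ⟨C, hC⟩ := hb.exists_norm_le
  have hpos : 0 < ‖r i‖ := norm_pos_iff.2 (hr i)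
  have hri : r i ∈ {x | ∃ i, α i = 0 ∧ x = r i} := ⟨i, h0.symm, rfl⟩
  have hC0 : 0 ≤ C + ‖f‖ + 1 := by
    have hf : f ∈ inducedSet k r f α :=
      ⟨f, subset_convexHull ℝ _ (Or.inl rfl), (0 : ℝ) • r i, mem_coneGen hri le_rfl, by simp⟩
    have := hC f hf
    have := norm_nonneg f
    linarith
  have hc : 0 ≤ (C + ‖f‖ + 1) / ‖r i‖ := by positivity
  have hmem : f + ((C + ‖f‖ + 1) / ‖r i‖) • r i ∈ inducedSet k r f α :=
    ⟨f, subset_convexHull ℝ _ (Or.inl rfl), _, mem_coneGen hri hc, rfl⟩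
  have h1 := hC _ hmem
  have h2 : ‖((C + ‖f‖ + 1) / ‖r i‖) • r i‖ = C + ‖f‖ + 1 := by
    rw [norm_smul, Real.norm_of_nonneg hc]
    field_simp
  have h3 := norm_le_add_norm_add f (((C + ‖f‖ + 1) / ‖r i‖) • r i)
  have h4 : ‖((C + ‖f‖ + 1) / ‖r i‖) • r i‖
      ≤ ‖f + ((C + ‖f‖ + 1) / ‖r i‖) • r i‖ + ‖f‖ := by
    have := norm_sub_le (f + ((C + ‖f‖ + 1) / ‖r i‖) • r i) f
    rwa [add_sub_cancel_left] at this
  linarith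

lemma inducedSet_eq_convexHull (hα : ∀ i, 0 < α i) :
    inducedSet k r f α = convexHull ℝ ({f} ∪ {x | ∃ i, 0 < α i ∧ x = f + (α i)⁻¹ • r i}) := by
  have : coneGen {x | ∃ i, α i = 0 ∧ x = r i} = {0} := by
    ext x
    constructor
    · rintro ⟨n, c, v, -, hv, rfl⟩
      simp only [mem_singleton_iff]
      refine Finset.sum_eq_zero fun j _ => ?_
      obtain ⟨i, hi, -⟩ := hv j
      exact absurd hi (hα i).ne'
    · rintro rfl
      exact ⟨0, fun _ => 0, fun _ => 0, fun j => j.elim0, fun j => j.elim0, by simp⟩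
  rw [inducedSet, this, singleton_zero, add_zero]

/-- An extreme point of the induced set other than `f` lies on one of the rays. -/
lemma exists_ray_of_mem_extremePoints (hα : ∀ i, 0 < α i) {v : Pt}
    (hv : v ∈ (inducedSet k r f α).extremePoints ℝ) (hne : v ≠ f) :
    ∃ i, v = f + (α i)⁻¹ • r i := by
  rw [inducedSet_eq_convexHull hα] at hv
  rcases extremePoints_convexHull_subset hv with h | ⟨i, -, hi⟩
  · exact absurd h hne
  · exact ⟨i, hi⟩

lemma exists_repr_of_mem_inducedSet (hα : ∀ i, 0 < α i) {w : Pt}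
    (hw : w ∈ inducedSet k r f α) :
    ∃ s : Fin k → ℝ, (∀ i, 0 ≤ s i) ∧ ∑ i, α i * s i ≤ 1 ∧ w = f + ∑ i, s i • r i := by
  rw [inducedSet_eq_convexHull hα] at hw
  have hconv : Convex ℝ (Prod.fst '' (relaxP k r f ∩ {p | ∑ i, α i * p.2 i ≤ 1})) := by
    have h2 : Convex ℝ {p : Pt × (Fin k → ℝ) | ∑ i, α i * p.2 i ≤ 1} := by
      refine convex_halfSpace_le ⟨fun p q => ?_, fun c p => ?_⟩ 1
      · simp [mul_add, Finset.sum_add_distrib]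
      · simp only [Prod.smul_snd, Pi.smul_apply, smul_eq_mul, Finset.mul_sum]
        exact Finset.sum_congr rfl fun i _ => by ring
    exact (convex_relaxP.inter h2).linear_image (LinearMap.fst ℝ Pt (Fin k → ℝ))
  have hsub : {f} ∪ {x | ∃ i, 0 < α i ∧ x = f + (α i)⁻¹ • r i} ⊆
      Prod.fst '' (relaxP k r f ∩ {p | ∑ i, α i * p.2 i ≤ 1}) := by
    rintro x (hx | ⟨i, -, rfl⟩)
    · rw [mem_singleton_iff.1 hx]
      exact ⟨(f, 0), ⟨⟨fun i => le_rfl, by simp⟩, by simp⟩, rfl⟩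
    · refine ⟨(f + (α i)⁻¹ • r i, Pi.single i (α i)⁻¹), ⟨⟨fun j => ?_, ?_⟩, ?_⟩, rfl⟩
      · by_cases h : j = i
        · subst h
          simp [(hα j).le]
        · simp [h]
      · simp [Pi.single_apply, ite_smul]
      · simp [Pi.single_apply, (hα i).ne']
  obtain ⟨p, ⟨⟨hp0, hp⟩, hp1⟩, rfl⟩ := convexHull_min hsub hconv hw
  exact ⟨p.2, hp0, hp1, hp⟩

/-- Validity of the inequality means that no integer point can be pushed away from `f` without
leaving the induced set. -/
lemma notMem_inducedSet_of_valid (hα : ∀ i, 0 < α i) (hvalid : ValidIneq k r f α 1)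
    {z : Pt} (hz : IsIntPt z) {ε : ℝ} (hε : 0 < ε) :
    z + ε • (z - f) ∉ inducedSet k r f α := by
  intro hw
  obtain ⟨s, hs0, hs1, hs⟩ := exists_repr_of_mem_inducedSet hα hw
  have h1 : (0 : ℝ) < 1 + ε := by linarith
  have hzf : z = f + ∑ i, ((1 + ε)⁻¹ * s i) • r i := by
    have : (1 + ε) • (z - f) = ∑ i, s i • r i := by
      rw [← sub_eq_iff_eq_add'] at hs
      rw [← hs]
      module
    simp only [mul_smul, ← Finset.smul_sum]
    rw [← this, inv_smul_smul₀ h1.ne']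
    abel
  have := hvalid (z, fun i => (1 + ε)⁻¹ * s i)
    ⟨hz, fun i => mul_nonneg (inv_nonneg.2 h1.le) (hs0 i), hzf⟩
  have h2 : ∑ i, α i * ((1 + ε)⁻¹ * s i) = (1 + ε)⁻¹ * ∑ i, α i * s i := by
    rw [Finset.mul_sum]
    exact Finset.sum_congr rfl fun i _ => by ring
  simp only [h2] at this
  rw [inv_mul_eq_div, le_div_iff₀ h1] at this
  linarith

/-- An affine function that is nonnegative on the induced set bounds `1 - ∑ αᵢ sᵢ`. -/
lemma mul_le_of_nonneg_on_inducedSet (hα : ∀ i, 0 < α i) (φ : Pt →ᵃ[ℝ] ℝ)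
    (hφ : ∀ x ∈ inducedSet k r f α, 0 ≤ φ x) {p : Pt × (Fin k → ℝ)} (hp : p ∈ relaxP k r f) :
    φ f * (1 - ∑ i, α i * p.2 i) ≤ φ p.1 := by
  obtain ⟨hp0, hp⟩ := hp
  have hadd : ∀ v, φ (f + v) = φ f + φ.linear v := fun v => by
    have := φ.map_vadd f v
    simp only [vadd_eq_add] at this
    rw [add_comm f v, this, add_comm]
  have hi : ∀ i, -(α i * φ f) ≤ φ.linear (r i) := fun i => by
    have hmem : f + (α i)⁻¹ • r i ∈ inducedSet k r f α := by
      rw [inducedSet_eq_convexHull hα]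
      exact subset_convexHull ℝ _ (Or.inr ⟨i, hα i, rfl⟩)
    have := hφ _ hmem
    rw [hadd, map_smul, smul_eq_mul] at this
    have h2 := mul_nonneg (hα i).le this
    rw [mul_add, mul_inv_cancel_left₀ (hα i).ne'] at h2
    linarith
  rw [hp, hadd, map_sum]
  have : ∑ i, -(p.2 i * (α i * φ f)) ≤ ∑ i, φ.linear (p.2 i • r i) := by
    refine Finset.sum_le_sum fun i _ => ?_
    rw [map_smul, smul_eq_mul]
    have := mul_le_mul_of_nonneg_left (hi i) (hp0 i)
    linarith
  have h3 : ∑ i, -(p.2 i * (α i * φ f)) = - (φ f * ∑ i, α i * p.2 i) := by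
    rw [Finset.mul_sum, ← Finset.sum_neg_distrib]
    exact Finset.sum_congr rfl fun i _ => by ring
  linarith

end InducedSet

lemma AffineMap.apply_add_smul_sub (φ : Pt →ᵃ[ℝ] ℝ) (x y : Pt) (t : ℝ) :
    φ (x + t • (y - x)) = φ x + t * (φ y - φ x) := by
  have := φ.apply_lineMap x y t
  simp only [AffineMap.lineMap_apply, vsub_eq_sub, vadd_eq_add, smul_eq_mul] at this
  rw [add_comm x, this, add_comm]

lemma exists_add_smul_mem_of_mem_interior {T : Set Pt} {f : Pt} (hf : f ∈ interior T) (p : Pt) :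
    ∃ ε > (0 : ℝ), f + ε • (p - f) ∈ T := by
  have hc : Continuous fun t : ℝ => f + t • (p - f) := by fun_prop
  have h0 : (fun t : ℝ => f + t • (p - f)) ⁻¹' interior T ∈ nhds (0 : ℝ) :=
    hc.continuousAt.preimage_mem_nhds (isOpen_interior.mem_nhds (by simpa using hf))
  obtain ⟨ε, hε, h⟩ := Metric.mem_nhds_iff.1 h0
  refine ⟨ε / 2, by positivity, interior_subset (h ?_)⟩
  rw [Metric.mem_ball, dist_zero_right, Real.norm_of_nonneg (by positivity)]
  linarith

lemma pos_of_mem_interior {T : Set Pt} {f : Pt} (hf : f ∈ interior T) {φ : Pt →ᵃ[ℝ] ℝ}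
    (hφ : ∀ x ∈ T, 0 ≤ φ x) {v : Pt} (hv : 0 < φ v) : 0 < φ f := by
  obtain ⟨ε, hε, h⟩ := exists_add_smul_mem_of_mem_interior hf (f + (f - v))
  have h1 := hφ _ h
  have h2 : φ (f + (f - v)) = φ f + (φ f - φ v) := by
    have := φ.apply_add_smul_sub f v (-1)
    rw [show f + (-1 : ℝ) • (v - f) = f + (f - v) by module] at this
    linarith
  rw [φ.apply_add_smul_sub, h2] at h1
  nlinarith

lemma nonneg_on_convexHull {φ : Pt →ᵃ[ℝ] ℝ} {S : Set Pt} (h : ∀ x ∈ S, 0 ≤ φ x) :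
    ∀ x ∈ convexHull ℝ S, 0 ≤ φ x := fun _ hx =>
  convexHull_min (t := φ ⁻¹' Ici 0) h ((convex_Ici 0).affine_preimage φ) hx

/-- A point of a set at which two nonnegative affine functions vanish, and which is determined
by this, is an extreme point. -/
lemma mem_extremePoints_of_affine {T : Set Pt} {φ ψ : Pt →ᵃ[ℝ] ℝ} (hφ : ∀ x ∈ T, 0 ≤ φ x)
    (hψ : ∀ x ∈ T, 0 ≤ ψ x) {v : Pt} (hv : v ∈ T) (hφv : φ v = 0) (hψv : ψ v = 0)
    (huniq : ∀ x, φ x = 0 → ψ x = 0 → x = v) : v ∈ T.extremePoints ℝ := by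
  have key : ∀ (χ : Pt →ᵃ[ℝ] ℝ), (∀ x ∈ T, 0 ≤ χ x) → χ v = 0 → ∀ x ∈ T, ∀ y ∈ T,
      v ∈ openSegment ℝ x y → χ x = 0 := by
    rintro χ hχ hχv x hx y hy ⟨a, b, ha, hb, hab, rfl⟩
    rw [Convex.combo_affine_apply hab, smul_eq_mul, smul_eq_mul] at hχv
    have h1 := hχ x hx
    have h2 := hχ y hy
    nlinarith [mul_nonneg hb.le h2, mul_nonneg ha.le h1]
  refine ⟨hv, fun x hx y hy hxy => ?_⟩
  exact huniq x (key φ hφ hφv x hx y hy hxy) (key ψ hψ hψv x hx y hy hxy)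

namespace IsIntCoord

variable {X Y : Pt →ᵃ[ℝ] ℝ}

lemma mem_openSegment_iff (H : IsIntCoord X Y) {v₀ v z : Pt} (hv : Y v = 0) (hv₀ : 0 < Y v₀) :
    z ∈ openSegment ℝ v₀ v ↔ 0 < Y z ∧ Y z < Y v₀ ∧
      X z = X v + Y z * ((X v₀ - X v) / Y v₀) := by
  constructor
  · rintro ⟨a, b, ha, hb, hab, rfl⟩
    rw [Convex.combo_affine_apply hab, Convex.combo_affine_apply hab, hv]
    simp only [smul_eq_mul]
    obtain rfl : b = 1 - a := by linarith
    refine ⟨by nlinarith, by nlinarith, ?_⟩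
    field_simp
    ring
  · rintro ⟨h1, h2, h3⟩
    have hab : Y z / Y v₀ + (1 - Y z / Y v₀) = 1 := by ring
    refine ⟨Y z / Y v₀, 1 - Y z / Y v₀, by positivity, ?_, hab, ?_⟩
    · rw [sub_pos, div_lt_one hv₀]
      exact h2
    · apply H.inj
      · rw [Convex.combo_affine_apply hab, h3]
        simp only [smul_eq_mul]
        field_simp
        ring
      · rw [Convex.combo_affine_apply hab, hv]
        simp only [smul_eq_mul]
        field_simp
        ring

lemma mem_convexHull (H : IsIntCoord X Y) {v₀ v₁ v₂ z : Pt} (hv₁ : Y v₁ = 0) (hv₂ : Y v₂ = 0)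
    (hv₀ : 0 < Y v₀) (h12 : X v₁ < X v₂) (h0 : 0 ≤ Y z)
    (h1 : X v₁ + Y z * ((X v₀ - X v₁) / Y v₀) ≤ X z)
    (h2 : X z ≤ X v₂ + Y z * ((X v₀ - X v₂) / Y v₀)) :
    z ∈ convexHull ℝ {v₀, v₁, v₂} := by
  set h := Y v₀ with hh
  set D := X v₂ - X v₁ with hD
  have hD0 : 0 < D := by linarith
  set a := Y z / h with ha
  set b := (X v₂ + Y z * ((X v₀ - X v₂) / h) - X z) / D with hb
  set c := (X z - (X v₁ + Y z * ((X v₀ - X v₁) / h))) / D with hc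
  have ha0 : 0 ≤ a := by positivity
  have hb0 : 0 ≤ b := div_nonneg (by linarith) hD0.le
  have hc0 : 0 ≤ c := div_nonneg (by linarith) hD0.le
  have hsum : a + b + c = 1 := by
    rw [ha, hb, hc]
    field_simp
    rw [hD]
    ring
  have haff : ∀ φ : Pt →ᵃ[ℝ] ℝ, φ (a • v₀ + b • v₁ + c • v₂) = a * φ v₀ + b * φ v₁ + c * φ v₂ := by
    intro φ
    have e : ∀ x, φ x = φ.linear x + φ 0 := fun x => by
      conv_lhs => rw [AffineMap.decomp φ]
      simp
    rw [e, e v₀, e v₁, e v₂]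
    simp only [map_add, map_smul, smul_eq_mul]
    linear_combination -(φ 0) * hsum
  have hz : z = a • v₀ + b • v₁ + c • v₂ := by
    apply H.inj
    · rw [haff, ha, hb, hc]
      field_simp
      rw [hD]
      ring
    · rw [haff, hv₁, hv₂, ha, ← hh]
      field_simp
      ring
  rw [hz]
  have hmem : ∀ x ∈ ({v₀, v₁, v₂} : Set Pt), x ∈ convexHull ℝ {v₀, v₁, v₂} :=
    fun x hx => subset_convexHull ℝ _ hx
  have := (convex_convexHull ℝ ({v₀, v₁, v₂} : Set Pt)).sum_mem (t := Finset.univ)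
    (w := ![a, b, c]) (z := ![v₀, v₁, v₂])
    (fun i _ => by fin_cases i <;> simpa) (by simpa [Fin.sum_univ_three] using hsum)
    (fun i _ => by fin_cases i <;> simp [hmem])
  simpa [Fin.sum_univ_three] using this

end IsIntCoord

/-- The lattice data of a triangle whose base lies on the first axis. -/
lemma IsIntCoord.sideData {X Y : Pt →ᵃ[ℝ] ℝ} (H : IsIntCoord X Y) {v₀ v₁ v₂ f : Pt}
    (hv₁ : Y v₁ = 0) (hv₂ : Y v₂ = 0) (hv₀ : 0 < Y v₀) (h1 : X v₁ ≤ 0) (h2 : 1 ≤ X v₂)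
    (hint : ¬ IsIntPt v₀) (hu₁ : ∃! z, z ∈ openSegment ℝ v₀ v₁ ∧ IsIntPt z)
    (hu₂ : ∃! z, z ∈ openSegment ℝ v₀ v₂ ∧ IsIntPt z)
    (hf0 : 0 < Y f) (hf1 : X v₁ + Y f * ((X v₀ - X v₁) / Y v₀) < X f)
    (hf2 : X f < X v₂ + Y f * ((X v₀ - X v₂) / Y v₀))
    (hfree : ∀ z, IsIntPt z → ∀ ε > (0 : ℝ),
      z + ε • (z - f) ∉ convexHull ℝ {v₀, v₁, v₂}) :
    SideData (X v₁) (X v₂) ((X v₀ - X v₁) / Y v₀) ((X v₀ - X v₂) / Y v₀) (Y v₀) := by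
  have hside : ∀ v, Y v = 0 → (∃! z, z ∈ openSegment ℝ v₀ v ∧ IsIntPt z) →
      (∃ m n : ℤ, (0 : ℝ) < n ∧ n < Y v₀ ∧ m = X v + n * ((X v₀ - X v) / Y v₀)) ∧
      ∀ m n m' n' : ℤ, (0 : ℝ) < n → n < Y v₀ → m = X v + n * ((X v₀ - X v) / Y v₀) →
        (0 : ℝ) < n' → n' < Y v₀ → m' = X v + n' * ((X v₀ - X v) / Y v₀) → n = n' := by
    rintro v hv ⟨z, ⟨hz, hzint⟩, huniq⟩
    constructor
    · obtain ⟨m, hm⟩ := H.fst.exists_int hzint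
      obtain ⟨n, hn⟩ := H.snd.exists_int hzint
      obtain ⟨e1, e2, e3⟩ := (H.mem_openSegment_iff hv hv₀).1 hz
      rw [hn] at e1 e2 e3
      rw [hm] at e3
      exact ⟨m, n, e1, e2, e3⟩
    · have key : ∀ m n : ℤ, (0 : ℝ) < n → n < Y v₀ →
          m = X v + n * ((X v₀ - X v) / Y v₀) → (n : ℝ) = Y z := by
        intro m n e1 e2 e3
        obtain ⟨w, hw, hm, hn⟩ := H.surj m n
        have : w = z := huniq w ⟨(H.mem_openSegment_iff hv hv₀).2
          ⟨by rwa [hn], by rwa [hn], by rwa [hn, hm]⟩, hw⟩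
        rw [← this, hn]
      intro m n m' n' e1 e2 e3 e4 e5 e6
      exact_mod_cast (key m n e1 e2 e3).trans (key m' n' e4 e5 e6).symm
  refine ⟨h1, h2, hv₀, ?_, ?_, ?_, (hside v₁ hv₁ hu₁).1, (hside v₂ hv₂ hu₂).1,
    (hside v₁ hv₁ hu₁).2, (hside v₂ hv₂ hu₂).2⟩
  · field_simp
    ring
  · intro m n hm hn
    refine hint (H.isIntPt (m := m) (n := n) ?_ hn)
    rw [← hm]
    field_simp
    ring
  · intro m n hn hl hr
    obtain ⟨z, hz, hzm, hzn⟩ := H.surj m n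
    rw [← hzn] at hn hl hr
    rw [← hzm] at hl hr
    have hpos : ∀ s t : ℝ, 0 < s → 0 < t → ∀ᶠ ε in nhdsWithin (0 : ℝ) (Ioi 0),
        0 ≤ s + ε * (s - t) := by
      intro s t hs ht
      have hc : Continuous fun ε : ℝ => s + ε * (s - t) := by fun_prop
      have := (hc.tendsto 0).eventually (lt_mem_nhds (a := 0) (by simpa using hs))
      exact (this.filter_mono nhdsWithin_le_nhds).mono fun _ h => h.le
    obtain ⟨ε, ⟨⟨e1, e2⟩, e3⟩, hε⟩ := (((hpos _ _ hn hf0).and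
      (hpos _ _ (sub_pos.2 hl) (sub_pos.2 hf1))).and
      (hpos _ _ (sub_pos.2 hr) (sub_pos.2 hf2))).and self_mem_nhdsWithin |>.exists
    refine hfree z hz ε hε (H.mem_convexHull hv₁ hv₂ hv₀ (by linarith) ?_ ?_ ?_)
    · have := Y.apply_add_smul_sub z f (-ε)
      rw [show z + -ε • (f - z) = z + ε • (z - f) by module] at this
      rw [this]
      linarith
    · have hY := Y.apply_add_smul_sub z f (-ε)
      have hX := X.apply_add_smul_sub z f (-ε)
      rw [show z + -ε • (f - z) = z + ε • (z - f) by module] at hX hY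
      rw [hX, hY]
      linarith
    · have hY := Y.apply_add_smul_sub z f (-ε)
      have hX := X.apply_add_smul_sub z f (-ε)
      rw [show z + -ε • (f - z) = z + ε • (z - f) by module] at hX hY
      rw [hX, hY]
      linarith

/-- Finiteness of the split rank for a triangle whose base lies on the first axis. -/
lemma IsIntCoord.splitRank_ne_top {X Y : Pt →ᵃ[ℝ] ℝ} (H : IsIntCoord X Y) {k : ℕ}
    {r : Fin k → Pt} {f : Pt} {α : Fin k → ℝ} (hr : ∀ i, IsRatPt (r i)) (hf : IsRatPt f)
    (hα : ∀ i, 0 < α i) (hvalid : ValidIneq k r f α 1)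
    (hfint : f ∈ interior (inducedSet k r f α)) {v₀ v₁ v₂ : Pt}
    (hT : inducedSet k r f α = convexHull ℝ {v₀, v₁, v₂})
    (hv₁ : Y v₁ = 0) (hv₂ : Y v₂ = 0) (hv₀ : 0 < Y v₀) (h1 : X v₁ ≤ 0) (h2 : 1 ≤ X v₂)
    (hint : ¬ IsIntPt v₀) (hu₁ : ∃! z, z ∈ openSegment ℝ v₀ v₁ ∧ IsIntPt z)
    (hu₂ : ∃! z, z ∈ openSegment ℝ v₀ v₂ ∧ IsIntPt z) :
    splitRank k r f α 1 ≠ ⊤ := by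
  have hne : Y v₀ ≠ 0 := hv₀.ne'
  obtain ⟨g₁, hg₁⟩ : ∃ g : Pt →ᵃ[ℝ] ℝ, ∀ x,
      g x = X x - (X v₁ + Y x * ((X v₀ - X v₁) / Y v₀)) :=
    ⟨X - AffineMap.const ℝ Pt (X v₁) - ((X v₀ - X v₁) / Y v₀) • Y, fun x => by simp; ring⟩
  obtain ⟨g₂, hg₂⟩ : ∃ g : Pt →ᵃ[ℝ] ℝ, ∀ x,
      g x = X v₂ + Y x * ((X v₀ - X v₂) / Y v₀) - X x :=
    ⟨AffineMap.const ℝ Pt (X v₂) + ((X v₀ - X v₂) / Y v₀) • Y - X, fun x => by simp; ring⟩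
  have g₁v₀ : g₁ v₀ = 0 := by rw [hg₁]; field_simp; ring
  have g₂v₀ : g₂ v₀ = 0 := by rw [hg₂]; field_simp; ring
  have g₁v₁ : g₁ v₁ = 0 := by rw [hg₁, hv₁]; ring
  have g₂v₂ : g₂ v₂ = 0 := by rw [hg₂, hv₂]; ring
  have g₁v₂ : 0 < g₁ v₂ := by rw [hg₁, hv₂]; linarith
  have g₂v₁ : 0 < g₂ v₁ := by rw [hg₂, hv₁]; linarith
  have hY0 : ∀ x ∈ inducedSet k r f α, 0 ≤ Y x := by
    rw [hT]
    apply nonneg_on_convexHull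
    rintro x (rfl | rfl | rfl) <;> linarith
  have hg₁0 : ∀ x ∈ inducedSet k r f α, 0 ≤ g₁ x := by
    rw [hT]
    apply nonneg_on_convexHull
    rintro x (rfl | rfl | rfl) <;> linarith
  have hg₂0 : ∀ x ∈ inducedSet k r f α, 0 ≤ g₂ x := by
    rw [hT]
    apply nonneg_on_convexHull
    rintro x (rfl | rfl | rfl) <;> linarith
  have hYf := pos_of_mem_interior hfint hY0 hv₀
  have hg₁f := pos_of_mem_interior hfint hg₁0 g₁v₂
  have hg₂f := pos_of_mem_interior hfint hg₂0 g₂v₁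
  have S := H.sideData hv₁ hv₂ hv₀ h1 h2 hint hu₁ hu₂ hYf
    (by linarith [hg₁ f]) (by linarith [hg₂ f])
    (fun z hz ε hε => hT ▸ notMem_inducedSet_of_valid hα hvalid hz hε)
  have hrat : ∀ v, v ∈ (inducedSet k r f α).extremePoints ℝ → Y v = 0 → ∃ q : ℚ, X v = q := by
    intro v hv hYv
    obtain ⟨i, rfl⟩ := exists_ray_of_mem_extremePoints hα hv (by rintro rfl; linarith)
    exact exists_rat_of_ray H.fst H.snd hf (hr i) hYv hYf.ne'
  obtain ⟨q₁, hq₁⟩ := hrat v₁ (mem_extremePoints_of_affine hY0 hg₁0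
    (hT ▸ subset_convexHull ℝ _ (by simp)) hv₁ g₁v₁ (fun x hx hgx => H.inj _ _
      (by rw [hg₁, hx] at hgx; linarith) (by rw [hx, hv₁]))) hv₁
  obtain ⟨q₂, hq₂⟩ := hrat v₂ (mem_extremePoints_of_affine hY0 hg₂0
    (hT ▸ subset_convexHull ℝ _ (by simp)) hv₂ g₂v₂ (fun x hx hgx => H.inj _ _
      (by rw [hg₂, hx] at hgx; linarith) (by rw [hx, hv₂]))) hv₂
  obtain ⟨m, hm₁, hm₂⟩ := S.exists_shear
  have hg₁' : ∀ x, g₁ x = (X - (m : ℝ) • Y) x - ((-q₁ : ℚ) : ℝ) * (Y x - 1) := fun x => by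
    have : (X v₀ - X v₁) / Y v₀ = m - q₁ := by linarith
    rw [hg₁, this, hq₁]
    simp
    ring
  have hg₂' : ∀ x, g₂ x = 1 - (X - (m : ℝ) • Y) x - ((q₂ - 1 : ℚ) : ℝ) * (Y x - 1) := fun x => by
    have : (X v₀ - X v₂) / Y v₀ = m + 1 - q₂ := by linarith
    rw [hg₂, this, hq₂]
    simp
    ring
  have hbound : ∀ φ : Pt →ᵃ[ℝ] ℝ, (∀ x ∈ inducedSet k r f α, 0 ≤ φ x) →
      ∀ᶠ p in splitFilter k r f, φ f * (1 - ∑ i, α i * p.2 i) ≤ φ p.1 := fun φ hφ =>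
    eventually_splitFilter.2 ⟨0, fun p hp => mul_le_of_nonneg_on_inducedSet hα φ hφ hp⟩
  have hmain := ((H.shear m).closedUnderSplits r f α).le_zero_of_triangle
    (a := -q₁) (b := q₂ - 1) (x := Y f) (l₁ := (g₁ f)⁻¹) (l₂ := (g₂ f)⁻¹)
    ?_ ?_ ?_ ?_ hYf (inv_pos.2 hg₁f) (inv_pos.2 hg₂f) (hbound Y hY0) ?_ ?_
  · apply _root_.splitRank_ne_top
    filter_upwards [hmain] with p hp
    linarith
  · have : (q₁ : ℝ) ≤ 0 := hq₁ ▸ h1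
    have : q₁ ≤ 0 := by exact_mod_cast this
    linarith
  · have : (1 : ℝ) ≤ q₂ := hq₂ ▸ h2
    have : 1 ≤ q₂ := by exact_mod_cast this
    linarith
  · intro h
    have h0 : q₁ = 0 := by linarith
    have := S.two_lt_of_eq_zero (by rw [hq₁, h0]; simp)
    rw [hq₂] at this
    have : 2 < q₂ := by exact_mod_cast this
    linarith
  · intro h
    have h0 : q₂ = 1 := by linarith
    have := S.lt_neg_one_of_eq_one (by rw [hq₂, h0]; simp)
    rw [hq₁] at this
    have : q₁ < -1 := by exact_mod_cast this
    linarith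
  · filter_upwards [hbound g₁ hg₁0] with p hp
    rw [← hg₁', inv_mul_eq_div, le_div_iff₀' hg₁f]
    exact hp
  · filter_upwards [hbound g₂ hg₂0] with p hp
    rw [← hg₂', inv_mul_eq_div, le_div_iff₀' hg₂f]
    exact hp

/-- Values of an affine function at two points of a segment are controlled by the endpoints. -/
lemma AffineMap.le_max_of_mem_segment (φ : Pt →ᵃ[ℝ] ℝ) {v w z : Pt} (hz : z ∈ segment ℝ v w) :
    φ z ≤ max (φ v) (φ w) ∧ min (φ v) (φ w) ≤ φ z := by
  have : φ z ∈ segment ℝ (φ v) (φ w) := by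
    rw [← image_segment]
    exact mem_image_of_mem φ hz
  rw [segment_eq_uIcc] at this
  exact ⟨this.2, this.1⟩

theorem t2A_finite_split_rank (k : ℕ)
    (hk : 1 ≤ k)
    (r : Fin k → Pt) (f : Pt)
    (hr_rat : ∀ i, IsRatPt (r i)) (hr_ne : ∀ i, r i ≠ 0)
    (hf_rat : IsRatPt f) (hf_int : ¬ IsIntPt f)
    (hne : (mixedP k r f).Nonempty)
    (α : Fin k → ℝ) (hα : ∀ i, 0 ≤ α i)
    (hvalid : ValidIneq k r f α 1)
    (hshape : IsT2A (inducedSet k r f α))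
    (hfint : f ∈ interior (inducedSet k r f α)) :
    splitRank k r f α 1 ≠ ⊤ := by
  obtain ⟨v₀, v₁, v₂, -, hint, hT, ⟨z, w, hzw, hz, hw, hzs, hws⟩, hu₁, hu₂⟩ := hshape
  have hpos : ∀ i, 0 < α i := pos_of_isBounded hα hr_ne
    (hT ▸ isBounded_convexHull.2 (Set.toFinite _).isBounded)
  obtain ⟨X, Y, H, hXz, hYz, hYw, hXw⟩ := exists_isIntCoord hz hw hzw
  have hYv : Y v₁ = 0 ∧ Y v₂ = 0 := by
    obtain ⟨a, b, ha, hb, hab, rfl⟩ := hzs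
    obtain ⟨c, d, hc, hd, hcd, rfl⟩ := hws
    rw [Convex.combo_affine_apply hab, smul_eq_mul, smul_eq_mul] at hYz hXz
    rw [Convex.combo_affine_apply hcd, smul_eq_mul, smul_eq_mul] at hYw hXw
    obtain rfl : b = 1 - a := by linarith
    obtain rfl : d = 1 - c := by linarith
    have hac : a - c ≠ 0 := by
      intro h
      obtain rfl : a = c := by linarith
      linarith
    have h12 : Y v₁ - Y v₂ = 0 := by
      have : (a - c) * (Y v₁ - Y v₂) = 0 := by linarith
      exact (mul_eq_zero.1 this).resolve_left hac
    constructor <;> nlinarith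
  obtain ⟨hYv₁, hYv₂⟩ := hYv
  have hYv₀ : Y v₀ ≠ 0 := by
    intro hYv₀
    have hzero : ∀ x ∈ inducedSet k r f α, Y x = 0 := by
      intro x hx
      rw [hT] at hx
      have h1 := nonneg_on_convexHull (φ := Y) (by rintro x (rfl | rfl | rfl) <;> linarith) x hx
      have h2 := nonneg_on_convexHull (φ := -Y)
        (by rintro x (rfl | rfl | rfl) <;> simp [*]) x hx
      simp at h2
      linarith
    obtain ⟨p, -, -, hp⟩ := H.surj 0 1
    obtain ⟨ε, hε, hmem⟩ := exists_add_smul_mem_of_mem_interior hfint p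
    have h1 := hzero _ hmem
    rw [Y.apply_add_smul_sub, hzero f (interior_subset hfint), hp] at h1
    push_cast at h1
    linarith
  obtain ⟨Y', H', hv₀, hv₁, hv₂⟩ : ∃ Y', IsIntCoord X Y' ∧ 0 < Y' v₀ ∧ Y' v₁ = 0 ∧ Y' v₂ = 0 := by
    rcases hYv₀.lt_or_gt with h | h
    · exact ⟨-Y, H.neg_snd, by simpa using h, by simpa using hYv₁, by simpa using hYv₂⟩
    · exact ⟨Y, H, h, hYv₁, hYv₂⟩
  have hXz' := (X.le_max_of_mem_segment hzs).2
  have hXw' := (X.le_max_of_mem_segment hws).1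
  rcases le_total (X v₁) (X v₂) with h | h
  · rw [min_eq_left h] at hXz'
    rw [max_eq_right h] at hXw'
    exact H'.splitRank_ne_top hr_rat hf_rat hpos hvalid hfint hT hv₁ hv₂ hv₀
      (by linarith) (by linarith) hint hu₁ hu₂
  · rw [min_eq_right h] at hXz'
    rw [max_eq_left h] at hXw'
    exact H'.splitRank_ne_top hr_rat hf_rat hpos hvalid hfint (by rw [hT, pair_comm]) hv₂ hv₁ hv₀
      (by linarith) (by linarith) hint hu₂ hu₁
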